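/- Let γ, l, c₀ be real parameters with γ > 1. Suppose a, b, c, d, A, B, C are real-valued differentiable functions on a real interval J solving the system (S), and suppose 𝒟(t) := 4A(t)C(t) − B(t)² > 0 for all t ∈ J. Then the function t ↦ (b(t) − c(t) − l) · 𝒟(t)^(−1/(2γ)) is constant on J (equivalently, b − c − l = const · 𝒟^(1/(2γ)) along every such solution). -/

import Mathlib

/-!
The symmetric pressure term `2c₀R` drops out of the antisymmetric part of the equation for `Q`, so
the absolute vorticity `w = b - c - l` satisfies the linear equation `w' = -tr(Q) w`. The matrix
equation for `R` makes `𝒟 = 4 det R` satisfy `𝒟' = -2γ tr(Q) 𝒟`, the two conjugation terms and the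
scalar term `(γ - 1) tr(Q) R` contributing `2` and `2(γ - 1)` to the factor `2γ`. Therefore
`(w 𝒟^p)' = -(1 + 2γp) tr(Q) w 𝒟^p`, which vanishes for `p = -1/(2γ)`.
-/

theorem eq_of_hasDerivWithinAt_zero {E : Type*} [NormedAddCommGroup E] [NormedSpace ℝ E]
    {f : ℝ → E} {J : Set ℝ} (hJ : J.OrdConnected) (hf : ∀ t ∈ J, HasDerivWithinAt f 0 J t)
    {s t : ℝ} (hs : s ∈ J) (ht : t ∈ J) : f s = f t := by
  have hnorm : ‖f s - f t‖ ≤ 0 * ‖s - t‖ :=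
    hJ.convex.norm_image_sub_le_of_norm_hasDerivWithin_le hf (fun _ _ => norm_zero.le) ht hs
  rwa [zero_mul, norm_le_zero_iff, sub_eq_zero] at hnorm

section PointwiseDerivatives

variable {J : Set ℝ} {t : ℝ}

theorem hasDerivWithinAt_mul_rpow_of_linear {w D : ℝ → ℝ} {r ρ : ℝ}
    (hw : HasDerivWithinAt w (r * w t) J t) (hD : HasDerivWithinAt D (ρ * D t) J t)
    (hDt : D t ≠ 0) (p : ℝ) :
    HasDerivWithinAt (fun τ => w τ * D τ ^ p) ((r + p * ρ) * (w t * D t ^ p)) J t := by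
  have hpow : HasDerivWithinAt (fun τ => D τ ^ p) (p * ρ * D t ^ p) J t := by
    refine (hD.rpow_const (p := p) (Or.inl hDt)).congr_deriv ?_
    rw [Real.rpow_sub_one hDt]
    field_simp
  refine (hw.mul hpow).congr_deriv ?_
  ring

theorem hasDerivWithinAt_absolute_vorticity {b c : ℝ → ℝ} {a d l q : ℝ}
    (hb : HasDerivWithinAt b (-(a + d) * b t + l * d - q) J t)
    (hc : HasDerivWithinAt c (-(a + d) * c t - l * a - q) J t) :
    HasDerivWithinAt (fun τ => b τ - c τ - l) (-(a + d) * (b t - c t - l)) J t := by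
  refine ((hb.sub hc).sub_const l).congr_deriv ?_
  ring

theorem hasDerivWithinAt_pressure_discriminant {A B C : ℝ → ℝ} {a b c d γ : ℝ}
    (hA : HasDerivWithinAt A (-2 * a * A t - c * B t - (γ - 1) * (a + d) * A t) J t)
    (hB : HasDerivWithinAt B (-2 * b * A t - 2 * c * C t - γ * (a + d) * B t) J t)
    (hC : HasDerivWithinAt C (-2 * d * C t - b * B t - (γ - 1) * (a + d) * C t) J t) :
    HasDerivWithinAt (fun τ => 4 * A τ * C τ - (B τ) ^ 2)
      (-(2 * γ) * (a + d) * (4 * A t * C t - (B t) ^ 2)) J t := by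
  refine (((hA.const_mul 4).mul hC).sub (hB.pow 2)).congr_deriv ?_
  push_cast
  ring

end PointwiseDerivatives

theorem stmt_0_general (γ l c₀ : ℝ) (hγ : γ ≠ 0) (J : Set ℝ) (hJ : J.OrdConnected)
    (a b c d A B C : ℝ → ℝ)
    (hsol : ∀ t ∈ J,
      HasDerivWithinAt b (-(a t + d t) * b t + l * d t - c₀ * B t) J t ∧
      HasDerivWithinAt c (-(a t + d t) * c t - l * a t - c₀ * B t) J t ∧
      HasDerivWithinAt A (-2 * a t * A t - c t * B t - (γ - 1) * (a t + d t) * A t) J t ∧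
      HasDerivWithinAt B (-2 * b t * A t - 2 * c t * C t - γ * (a t + d t) * B t) J t ∧
      HasDerivWithinAt C (-2 * d t * C t - b t * B t - (γ - 1) * (a t + d t) * C t) J t)
    (hD : ∀ t ∈ J, 0 < 4 * A t * C t - (B t) ^ 2) :
    ∀ s ∈ J, ∀ t ∈ J,
      (b s - c s - l) * (4 * A s * C s - (B s) ^ 2) ^ (-(1 / (2 * γ))) =
      (b t - c t - l) * (4 * A t * C t - (B t) ^ 2) ^ (-(1 / (2 * γ))) := by
  intro s hs t ht
  refine eq_of_hasDerivWithinAt_zero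
    (f := fun τ => (b τ - c τ - l) * (4 * A τ * C τ - (B τ) ^ 2) ^ (-(1 / (2 * γ))))
    hJ (fun τ hτ => ?_) hs ht
  obtain ⟨hb, hc, hA, hB, hC⟩ := hsol τ hτ
  have hvorticity := hasDerivWithinAt_absolute_vorticity hb hc
  have hdiscriminant := hasDerivWithinAt_pressure_discriminant hA hB hC
  have hrate : -(a τ + d τ) + -(1 / (2 * γ)) * (-(2 * γ) * (a τ + d τ)) = 0 := by
    field_simp
    ring
  refine (hasDerivWithinAt_mul_rpow_of_linear hvorticity hdiscriminant (hD τ hτ).ne'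
    (-(1 / (2 * γ)))).congr_deriv ?_
  rw [hrate, zero_mul]

/-- The first integral `b - c - l = const · (4AC - B²)^(1/(2γ))` of the
full system (S) of the 2D rotating compressible Euler equations with linear velocity
profile: the quantity `(b - c - l) · 𝒟^(-1/(2γ))` is constant on any interval `J`
on which `(a,b,c,d,A,B,C)` solves (S) and `𝒟 = 4AC - B² > 0`. -/
theorem stmt_0 (γ l c₀ : ℝ) (hγ : 1 < γ) (J : Set ℝ) (hJ : J.OrdConnected)
    (a b c d A B C : ℝ → ℝ)
    (hsol : ∀ t ∈ J,
      HasDerivAt a (-(a t) ^ 2 - b t * c t + l * c t - 2 * c₀ * A t) t ∧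
      HasDerivAt b (-(a t + d t) * b t + l * d t - c₀ * B t) t ∧
      HasDerivAt c (-(a t + d t) * c t - l * a t - c₀ * B t) t ∧
      HasDerivAt d (-(d t) ^ 2 - b t * c t - l * b t - 2 * c₀ * C t) t ∧
      HasDerivAt A (-2 * a t * A t - c t * B t - (γ - 1) * (a t + d t) * A t) t ∧
      HasDerivAt B (-2 * b t * A t - 2 * c t * C t - γ * (a t + d t) * B t) t ∧
      HasDerivAt C (-2 * d t * C t - b t * B t - (γ - 1) * (a t + d t) * C t) t)
    (hD : ∀ t ∈ J, 0 < 4 * A t * C t - (B t) ^ 2) :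
    ∀ s ∈ J, ∀ t ∈ J,
      (b s - c s - l) * (4 * A s * C s - (B s) ^ 2) ^ (-(1 / (2 * γ))) =
      (b t - c t - l) * (4 * A t * C t - (B t) ^ 2) ^ (-(1 / (2 * γ))) := by
  refine stmt_0_general γ l c₀ (zero_lt_one.trans hγ).ne' J hJ a b c d A B C (fun t ht => ?_) hD
  obtain ⟨-, hb, hc, -, hA, hB, hC⟩ := hsol t ht
  exact ⟨hb.hasDerivWithinAt, hc.hasDerivWithinAt, hA.hasDerivWithinAt, hB.hasDerivWithinAt,
    hC.hasDerivWithinAt⟩
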